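/- Let 𝚫 ∈ Ã and let 𝒪₁, …, 𝒪_m be the pairwise distinct triangles in 𝚫 (i.e. all of them). If α_i ∈ 𝒪_i for each i ∈ [1,m] and 𝚫' := 𝚫 ∖ {α₁,…,α_m}, then 𝚫' is a 1-cycle gentle quiver. -/

import Mathlib

/-! Common formalization infrastructure for gentle quivers (Bobinski–Buan,
    "Derived equivalence classification of gentle cluster tilted algebras"). -/

/-- A (finite) quiver with (length-two, monomial) relations.  Vertices and
arrows are natural numbers; `V` and `A` are the finite sets of vertices and
arrows, `src`/`tgt` give the start and terminus of each arrow, and `rel` is the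
set of relations, a relation `(a, b)` standing for the length-two path
`a·b` (so `src a = tgt b`). -/
structure QuivRel where
  V : Finset ℕ
  A : Finset ℕ
  src : ℕ → ℕ
  tgt : ℕ → ℕ
  rel : Finset (ℕ × ℕ)

namespace GentleQuiv

/-- Two vertices are adjacent if some arrow joins them (in either direction). -/
def Adj (Q : QuivRel) (x y : ℕ) : Prop :=
  ∃ a ∈ Q.A, (Q.src a = x ∧ Q.tgt a = y) ∨ (Q.src a = y ∧ Q.tgt a = x)

/-- A quiver is connected if any two of its vertices are joined by a walk. -/
def Connected (Q : QuivRel) : Prop :=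
  ∀ x ∈ Q.V, ∀ y ∈ Q.V, Relation.ReflTransGen (Adj Q) x y

/-- `l = [α₁, …, αₙ]` is a (nonempty) path in the quiver: consecutive arrows
compose, i.e. `s αᵢ = t αᵢ₊₁`. -/
def IsPathList (Q : QuivRel) (l : List ℕ) : Prop :=
  l ≠ [] ∧ (∀ a ∈ l, a ∈ Q.A) ∧ l.Chain' (fun a b => Q.src a = Q.tgt b)

/-- The path `l` contains a subpath (two consecutive arrows) lying in `R`. -/
def HasRelSubpath (Q : QuivRel) (l : List ℕ) : Prop :=
  ∃ a b, (a, b) ∈ Q.rel ∧ [a, b] <:+: l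

/-- Gentle quiver: connected, relations are composable pairs of arrows, at most
two arrows in/out of every vertex, the usual gentleness conditions on
relations, and a global bound forcing finite dimensionality. -/
def IsGentle (Q : QuivRel) : Prop :=
  Q.V.Nonempty ∧
  (∀ a ∈ Q.A, Q.src a ∈ Q.V ∧ Q.tgt a ∈ Q.V) ∧
  Connected Q ∧
  (∀ ρ ∈ Q.rel, ρ.1 ∈ Q.A ∧ ρ.2 ∈ Q.A ∧ Q.src ρ.1 = Q.tgt ρ.2) ∧
  (∀ x, (Q.A.filter fun a => Q.src a = x).card ≤ 2) ∧
  (∀ x, (Q.A.filter fun a => Q.tgt a = x).card ≤ 2) ∧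
  (∀ a ∈ Q.A, (Q.A.filter fun b => Q.src b = Q.tgt a ∧ (b, a) ∉ Q.rel).card ≤ 1) ∧
  (∀ a ∈ Q.A, (Q.A.filter fun c => Q.tgt c = Q.src a ∧ (a, c) ∉ Q.rel).card ≤ 1) ∧
  (∀ a ∈ Q.A, (Q.A.filter fun b => (b, a) ∈ Q.rel).card ≤ 1) ∧
  (∀ a ∈ Q.A, (Q.A.filter fun c => (a, c) ∈ Q.rel).card ≤ 1) ∧
  (∃ n : ℕ, ∀ l : List ℕ, IsPathList Q l → l.length = n → HasRelSubpath Q l)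

/-- A choice of functions `σ, τ : Δ₁ → {±1}` as in Avella-Alaminos–Geiss. -/
structure SigmaTau (Q : QuivRel) where
  σ : ℕ → ℤ
  τ : ℕ → ℤ
  σ_pm : ∀ a ∈ Q.A, σ a = 1 ∨ σ a = -1
  τ_pm : ∀ a ∈ Q.A, τ a = 1 ∨ τ a = -1
  σ_src : ∀ a ∈ Q.A, ∀ b ∈ Q.A, a ≠ b → Q.src a = Q.src b → σ a = -σ b
  τ_tgt : ∀ a ∈ Q.A, ∀ b ∈ Q.A, a ≠ b → Q.tgt a = Q.tgt b → τ a = -τ b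
  rel_iff : ∀ a ∈ Q.A, ∀ b ∈ Q.A, Q.src a = Q.tgt b → ((a, b) ∈ Q.rel ↔ σ a = τ b)

/-- A thread: either a trivial path/antipath `1_{x,ε}` at a vertex `x` with a
sign `ε`, or a sequence of arrows of positive length. -/
inductive Thread where
  | triv (x : ℕ) (ε : ℤ) : Thread
  | arrows (l : List ℕ) : Thread
deriving DecidableEq

/-- Source of a thread. -/
def Thread.source (Q : QuivRel) : Thread → ℕ
  | .triv x _ => x
  | .arrows l => Q.src l.getLast!

/-- Target of a thread. -/
def Thread.target (Q : QuivRel) : Thread → ℕ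
  | .triv x _ => x
  | .arrows l => Q.tgt l.head!

/-- `σω` (for paths and antipaths alike; `σ 1_{x,ε} = ε = σ 1'_{x,ε}`). -/
def Thread.sigma {Q : QuivRel} (st : SigmaTau Q) : Thread → ℤ
  | .triv _ ε => ε
  | .arrows l => st.σ l.getLast!

/-- `τω` when `ω` is regarded as a path (`τ 1_{x,ε} = -ε`). -/
def Thread.tauPath {Q : QuivRel} (st : SigmaTau Q) : Thread → ℤ
  | .triv _ ε => -ε
  | .arrows l => st.τ l.head!

/-- `τω` when `ω` is regarded as an antipath (`τ 1'_{x,ε} = ε`). -/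
def Thread.tauAnti {Q : QuivRel} (st : SigmaTau Q) : Thread → ℤ
  | .triv _ ε => ε
  | .arrows l => st.τ l.head!

/-- Length of a thread. -/
def Thread.len : Thread → ℕ
  | .triv _ _ => 0
  | .arrows l => l.length

/-- A path in `𝚫` of positive length (no two consecutive arrows in `R`). -/
def IsPermList (Q : QuivRel) (l : List ℕ) : Prop :=
  IsPathList Q l ∧ l.Chain' (fun a b => (a, b) ∉ Q.rel)

/-- An antipath in `𝚫` of positive length (all consecutive pairs in `R`). -/
def IsAntiList (Q : QuivRel) (l : List ℕ) : Prop :=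
  l ≠ [] ∧ (∀ a ∈ l, a ∈ Q.A) ∧ l.Chain' (fun a b => (a, b) ∈ Q.rel)

/-- A thread is a path in `𝚫` (including trivial ones). -/
def IsPathThread (Q : QuivRel) : Thread → Prop
  | .triv x ε => x ∈ Q.V ∧ (ε = 1 ∨ ε = -1)
  | .arrows l => IsPermList Q l

/-- A thread is an antipath in `𝚫` (including trivial ones). -/
def IsAntiThread (Q : QuivRel) : Thread → Prop
  | .triv x ε => x ∈ Q.V ∧ (ε = 1 ∨ ε = -1)
  | .arrows l => IsAntiList Q l

/-- `w ∈ ℳ`: `w` is a maximal path of `𝚫`. -/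
def InM (Q : QuivRel) (st : SigmaTau Q) (w : Thread) : Prop :=
  IsPathThread Q w ∧
  (¬ ∃ a ∈ Q.A, Q.src a = w.target Q ∧ st.σ a = -(w.tauPath st)) ∧
  (¬ ∃ b ∈ Q.A, Q.tgt b = w.source Q ∧ st.τ b = -(w.sigma st))

/-- `w ∈ 𝒩`: `w` is a maximal antipath of `𝚫`. -/
def InN (Q : QuivRel) (st : SigmaTau Q) (w : Thread) : Prop :=
  IsAntiThread Q w ∧
  (¬ ∃ a ∈ Q.A, Q.src a = w.target Q ∧ st.σ a = w.tauAnti st) ∧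
  (¬ ∃ b ∈ Q.A, Q.tgt b = w.source Q ∧ st.τ b = w.sigma st)

/-- The graph of the bijection `Φ = φ ∘ ψ : 𝒩 → 𝒩`:  `PhiRel Q st w w'` holds
iff `w, w' ∈ 𝒩` and the maximal path `ψ w` (with `s(ψw) = sw`, `σ(ψw) = -σw`)
satisfies `t w' = t (ψ w)` and `τ w' = -τ(ψ w)`, i.e. `w' = φ (ψ w) = Φ w`. -/
def PhiRel (Q : QuivRel) (st : SigmaTau Q) (w w' : Thread) : Prop :=
  InN Q st w ∧ InN Q st w' ∧
  ∃ m : Thread, InM Q st m ∧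
    m.source Q = w.source Q ∧ m.sigma st = -(w.sigma st) ∧
    w'.target Q = m.target Q ∧ w'.tauAnti st = -(m.tauPath st)

/-- `O` is an orbit of the `ℤ`-action on `𝒩` induced by `Φ`. -/
def NOrbit (Q : QuivRel) (st : SigmaTau Q) (O : Set Thread) : Prop :=
  ∃ w, InN Q st w ∧ O = {w' | Relation.EqvGen (PhiRel Q st) w w'}

/-- `p(𝒪) = |𝒪|` for an orbit `𝒪 ∈ 𝒩/ℤ`. -/
noncomputable def pN (O : Set Thread) : ℕ := O.ncard

/-- `q(𝒪) = Σ_{ω ∈ 𝒪} ℓ(ω)` for an orbit `𝒪 ∈ 𝒩/ℤ`. -/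
noncomputable def qN (O : Set Thread) : ℕ := ∑ᶠ w ∈ O, Thread.len w

/-- `a ∈ 𝒞`: the arrow `a` occurs in no maximal antipath. -/
def InC (Q : QuivRel) (st : SigmaTau Q) (a : ℕ) : Prop :=
  a ∈ Q.A ∧ ¬ ∃ l : List ℕ, InN Q st (.arrows l) ∧ a ∈ l

/-- The graph of the bijection `Ψ : 𝒞 → 𝒞`. -/
def PsiRel (Q : QuivRel) (st : SigmaTau Q) (a b : ℕ) : Prop :=
  InC Q st a ∧ InC Q st b ∧ Q.tgt b = Q.src a ∧ st.τ b = st.σ a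

/-- `O` is an orbit of the `ℤ`-action on `𝒞` induced by `Ψ`. -/
def COrbit (Q : QuivRel) (st : SigmaTau Q) (O : Set ℕ) : Prop :=
  ∃ a, InC Q st a ∧ O = {b | Relation.EqvGen (PsiRel Q st) a b}

/-- The Avella-Alaminos–Geiss invariant `f_𝚫 : ℕ² → ℕ`:  `f_𝚫 (p,q)` counts the
orbits `𝒪 ∈ 𝒩/ℤ ⊔ 𝒞/ℤ` with `p(𝒪) = p` and `q(𝒪) = q`. -/
noncomputable def fInv (Q : QuivRel) (st : SigmaTau Q) : ℕ × ℕ → ℕ := fun pq =>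
  {O : Set Thread | NOrbit Q st O ∧ pN O = pq.1 ∧ qN O = pq.2}.ncard +
  {O : Set ℕ | COrbit Q st O ∧ pq.1 = 0 ∧ O.ncard = pq.2}.ncard

/-- `[p, q] : ℕ² → ℕ`, the characteristic function of `{(p, q)}`. -/
def charFn (p q : ℕ) : ℕ × ℕ → ℕ := fun pq => if pq = (p, q) then 1 else 0

/-- Tree type: `|Δ₀| = |Δ₁| + 1`. -/
def TreeType (Q : QuivRel) : Prop := Q.V.card = Q.A.card + 1

/-- Removing a set of arrows (keeping all vertices); relations containing a
removed arrow are discarded. -/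
def deleteArrows (Q : QuivRel) (S : Finset ℕ) : QuivRel where
  V := Q.V
  A := Q.A \ S
  src := Q.src
  tgt := Q.tgt
  rel := Q.rel.filter fun ρ => ρ.1 ∉ S ∧ ρ.2 ∉ S

/-- Branch arrow: removing it disconnects the quiver. -/
def BranchArrow (Q : QuivRel) (a : ℕ) : Prop :=
  a ∈ Q.A ∧ ¬ Connected (deleteArrows Q {a})

/-- Cycle arrow: removing it leaves the quiver connected. -/
def CycleArrow (Q : QuivRel) (a : ℕ) : Prop :=
  a ∈ Q.A ∧ Connected (deleteArrows Q {a})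

/-- Branch relation: a relation one of whose arrows is a branch arrow. -/
def BranchRel (Q : QuivRel) (ρ : ℕ × ℕ) : Prop :=
  ρ ∈ Q.rel ∧ (BranchArrow Q ρ.1 ∨ BranchArrow Q ρ.2)

/-- A relation `ρ = (α, β)` is isolated if the antipath `(α, β)` is a maximal
antipath, i.e. `ρ ∈ 𝒩`. -/
def Isolated (Q : QuivRel) (st : SigmaTau Q) (ρ : ℕ × ℕ) : Prop :=
  ρ ∈ Q.rel ∧ InN Q st (.arrows [ρ.1, ρ.2])

/-- `Q'` is obtained from `Q` by completing the relations from `R₀`, the new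
arrow attached to `ρ ∈ R₀` being `γ ρ`. -/
structure IsCompletion (Q : QuivRel) (R0 : Finset (ℕ × ℕ)) (γ : ℕ × ℕ → ℕ)
    (Q' : QuivRel) : Prop where
  subset : R0 ⊆ Q.rel
  fresh : ∀ ρ ∈ R0, γ ρ ∉ Q.A
  inj : ∀ ρ ∈ R0, ∀ ρ' ∈ R0, γ ρ = γ ρ' → ρ = ρ'
  V_eq : Q'.V = Q.V
  A_eq : Q'.A = Q.A ∪ R0.image γ
  src_old : ∀ a ∈ Q.A, Q'.src a = Q.src a
  tgt_old : ∀ a ∈ Q.A, Q'.tgt a = Q.tgt a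
  src_new : ∀ ρ ∈ R0, Q'.src (γ ρ) = Q.tgt ρ.1
  tgt_new : ∀ ρ ∈ R0, Q'.tgt (γ ρ) = Q.src ρ.2
  rel_eq : Q'.rel = Q.rel ∪ R0.image (fun ρ => (γ ρ, ρ.1)) ∪
      R0.image (fun ρ => (ρ.2, γ ρ))

/-- A 3-cycle: three pairwise distinct arrows forming an oriented cycle. -/
def Is3Cycle (Q : QuivRel) (a0 a1 a2 : ℕ) : Prop :=
  a0 ∈ Q.A ∧ a1 ∈ Q.A ∧ a2 ∈ Q.A ∧ a0 ≠ a1 ∧ a1 ≠ a2 ∧ a0 ≠ a2 ∧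
  Q.src a0 = Q.tgt a1 ∧ Q.src a1 = Q.tgt a2 ∧ Q.src a2 = Q.tgt a0

/-- A triangle: a 3-cycle all of whose three compositions are relations. -/
def IsTriangleTriple (Q : QuivRel) (a0 a1 a2 : ℕ) : Prop :=
  Is3Cycle Q a0 a1 a2 ∧ (a0, a1) ∈ Q.rel ∧ (a1, a2) ∈ Q.rel ∧ (a2, a0) ∈ Q.rel

/-- The (unordered) set of arrows of a triangle. -/
def TriangleSet (Q : QuivRel) (O : Finset ℕ) : Prop :=
  ∃ a0 a1 a2, O = {a0, a1, a2} ∧ IsTriangleTriple Q a0 a1 a2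

/-- Branch triangle: removing any two of its arrows disconnects the quiver. -/
def BranchTriangle (Q : QuivRel) (O : Finset ℕ) : Prop :=
  TriangleSet Q O ∧ ∀ S ⊆ O, S.card = 2 → ¬ Connected (deleteArrows Q S)

/-- Free relation: a relation neither of whose arrows lies in `𝒞`. -/
def FreeRel (Q : QuivRel) (st : SigmaTau Q) (ρ : ℕ × ℕ) : Prop :=
  ρ ∈ Q.rel ∧ ¬ InC Q st ρ.1 ∧ ¬ InC Q st ρ.2

/-- The class `𝒜`: gentle quivers with `f_𝚫 = m·[0,3] + [p+m+2, p]`. -/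
def ClassA (Q : QuivRel) (st : SigmaTau Q) : Prop :=
  IsGentle Q ∧ ∃ m p : ℕ, ∀ x, fInv Q st x = m * charFn 0 3 x + charFn (p + m + 2) p x

/-- The class `Ã`: gentle quivers with
`f_𝚫 = (m₁+m₂)·[0,3] + [p+m₁, p] + [q+m₂, q]`, `p+m₁ > 0`, `q+m₂ > 0`. -/
def ClassAtilde (Q : QuivRel) (st : SigmaTau Q) : Prop :=
  IsGentle Q ∧ ∃ m1 m2 p q : ℕ, 0 < p + m1 ∧ 0 < q + m2 ∧
    ∀ x, fInv Q st x =
      (m1 + m2) * charFn 0 3 x + charFn (p + m1) p x + charFn (q + m2) q x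

/-- Isomorphism of quivers with relations. -/
def IsoQR (Q Q' : QuivRel) : Prop :=
  ∃ fV fA : ℕ → ℕ,
    Set.BijOn fV ↑Q.V ↑Q'.V ∧ Set.BijOn fA ↑Q.A ↑Q'.A ∧
    (∀ a ∈ Q.A, Q'.src (fA a) = fV (Q.src a) ∧ Q'.tgt (fA a) = fV (Q.tgt a)) ∧
    (∀ a ∈ Q.A, ∀ b ∈ Q.A, ((a, b) ∈ Q.rel ↔ (fA a, fA b) ∈ Q'.rel))

/-- The quiver has no loops. -/
def NoLoops (Q : QuivRel) : Prop := ∀ a ∈ Q.A, Q.src a ≠ Q.tgt a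

/-- The reflection at `x` is defined: every arrow starting at `x` admits a
(necessarily unique) companion arrow ending at `x` not bound by a relation. -/
def CanReflect (Q : QuivRel) (x : ℕ) : Prop :=
  x ∈ Q.V ∧ ∀ a ∈ Q.A, Q.src a = x → ∃ b ∈ Q.A, Q.tgt b = x ∧ (a, b) ∉ Q.rel

/-- `Q'` is the reflection of the gentle loop-free quiver `Q` at the vertex
`x`, following Brenner–Butler tilting. -/
def IsReflection (Q : QuivRel) (x : ℕ) (Q' : QuivRel) : Prop :=
  IsGentle Q ∧ NoLoops Q ∧ CanReflect Q x ∧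
  Q'.V = Q.V ∧ Q'.A = Q.A ∧
  (∀ a ∈ Q.A, Q.tgt a = x → Q'.src a = x ∧ Q'.tgt a = Q.src a) ∧
  (∀ a ∈ Q.A, Q.src a = x →
    ∀ b ∈ Q.A, Q.tgt b = x → (a, b) ∉ Q.rel → Q'.src a = Q.src b) ∧
  (∀ a ∈ Q.A, Q.tgt a ≠ x → Q.src a ≠ x → Q'.src a = Q.src a) ∧
  (∀ a ∈ Q.A, Q.tgt a ≠ x →
    ((∃ b ∈ Q.A, Q.tgt b = x ∧ Q.src b = Q.tgt a ∧ (b, a) ∈ Q.rel) → Q'.tgt a = x) ∧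
    ((¬ ∃ b ∈ Q.A, Q.tgt b = x ∧ Q.src b = Q.tgt a ∧ (b, a) ∈ Q.rel) →
      Q'.tgt a = Q.tgt a)) ∧
  (∀ a b : ℕ, (a, b) ∈ Q'.rel ↔
    (((a, b) ∈ Q.rel ∧ Q.tgt a ≠ x ∧ Q.src a ≠ x) ∨
     (a ∈ Q.A ∧ b ∈ Q.A ∧ Q.src a = x ∧ Q.tgt b = x ∧ (a, b) ∉ Q.rel) ∨
     (a ∈ Q.A ∧ b ∈ Q.A ∧ Q.tgt a = x ∧
       ∃ c ∈ Q.A, c ≠ a ∧ Q.tgt c = x ∧ Q.src c = Q.tgt b ∧ (c, b) ∈ Q.rel)))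

/-- The opposite quiver with relations. -/
def opQR (Q : QuivRel) : QuivRel where
  V := Q.V
  A := Q.A
  src := Q.tgt
  tgt := Q.src
  rel := Q.rel.image fun ρ => (ρ.2, ρ.1)

/-- Coreflection: the dual of reflection. -/
def IsCoreflection (Q : QuivRel) (x : ℕ) (Q' : QuivRel) : Prop :=
  IsReflection (opQR Q) x (opQR Q')

/-- One step of reflection equivalence: a reflection, a coreflection, or an
isomorphism of quivers with relations. -/
def RefStep (Q Q' : QuivRel) : Prop :=
  (∃ x, IsReflection Q x Q') ∨ (∃ x, IsCoreflection Q x Q') ∨ IsoQR Q Q'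

/-- Reflection equivalence: a finite sequence of reflections/coreflections,
up to isomorphism of quivers with relations. -/
def RefEquiv : QuivRel → QuivRel → Prop := Relation.ReflTransGen RefStep

/-- A cyclic orientation of a `1`-cycle quiver without branch arrows (i.e. a
cycle): enumerations of the vertices and arrows by `ZMod n` such that the
`i`-th arrow joins the `i`-th and `(i+1)`-st vertices. -/
structure CyclicOrientation (Q : QuivRel) (n : ℕ) where
  ev : ZMod n → ℕ
  ea : ZMod n → ℕ
  ev_mem : ∀ i, ev i ∈ Q.V
  ea_mem : ∀ i, ea i ∈ Q.A
  ev_inj : Function.Injective ev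
  ea_inj : Function.Injective ea
  ev_surj : ∀ v ∈ Q.V, ∃ i, ev i = v
  ea_surj : ∀ a ∈ Q.A, ∃ i, ea i = a
  compat : ∀ i : ZMod n,
    (Q.src (ea i) = ev i ∧ Q.tgt (ea i) = ev (i + 1)) ∨
    (Q.src (ea i) = ev (i + 1) ∧ Q.tgt (ea i) = ev i)

/-- Clockwise arrow with respect to a cyclic orientation. -/
def Clockwise (Q : QuivRel) {n : ℕ} (co : CyclicOrientation Q n) (a : ℕ) : Prop :=
  a ∈ Q.A ∧ ∃ i : ZMod n, co.ea i = a ∧ Q.src a = co.ev i ∧ Q.tgt a = co.ev (i + 1)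

/-- Anticlockwise arrow with respect to a cyclic orientation. -/
def Anticlockwise (Q : QuivRel) {n : ℕ} (co : CyclicOrientation Q n) (a : ℕ) : Prop :=
  a ∈ Q.A ∧ ∃ i : ZMod n, co.ea i = a ∧ Q.src a = co.ev (i + 1) ∧ Q.tgt a = co.ev i

end GentleQuiv

namespace GentleQuiv

/-!
For a gentle quiver, a maximal antipath is determined by its terminus together with its sign, and
the pairs `(x, ε)` that occur are those from which no arrow departs; hence `∑ p(𝒪) = |𝒩|` equals
`2|Δ₀| - |Δ₁|`. Every arrow lies either in exactly one maximal antipath or in `𝒞`, so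
`∑ q(𝒪) = |Δ₁|`. For `𝚫 ∈ Ã` these two sums give `|Δ₁| - |Δ₀| = m₁ + m₂ = f_𝚫(0, 3)`, which is the
number of triangles: an orbit in `𝒩/ℤ` is nonempty and so has `p(𝒪) ≠ 0`. Distinct triangles are
disjoint, being orbits in `𝒞/ℤ`, so exactly one arrow is removed for each of them, and the two
arrows of a triangle that remain keep the ends of the removed one connected.
-/

open Relation

section MaximalChain

variable {α : Type*} {R : α → α → Prop}

/-- A nonempty list of consecutive `R`-related elements that cannot be prolonged at either end.
For `R` the set of relations of a gentle quiver these are the maximal antipaths of positive length.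
This is not the order-theoretic `IsMaxChain`. -/
structure IsMaximalChain (R : α → α → Prop) (l : List α) : Prop where
  ne_nil : l ≠ []
  isChain : l.IsChain R
  not_rel_head : ∀ a ∈ l.head?, ∀ b, ¬ R b a
  not_getLast_rel : ∀ a ∈ l.getLast?, ∀ b, ¬ R a b

theorem reflTransGen_of_isChain_cons {a x : α} {l : List α} (hl : (a :: l).IsChain R)
    (hx : x ∈ a :: l) : ReflTransGen R a x :=
  hl.induction (ReflTransGen R a) _ (fun _ _ h hax ↦ hax.tail h) (fun _ ↦ .refl) x hx

theorem mem_of_isChain_of_rel (hR : Relator.RightUnique R) {x y : α} :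
    ∀ {l : List α}, l.IsChain R → (∀ a ∈ l.getLast?, ∀ b, ¬ R a b) → x ∈ l → R x y → y ∈ l
  | [], _, _, hx, _ => by simp at hx
  | [a], _, hlast, hx, hxy => by
    rw [List.mem_singleton] at hx
    exact (hlast a rfl y (hx ▸ hxy)).elim
  | a :: b :: l, hl, hlast, hx, hxy => by
    rw [List.isChain_cons_cons] at hl
    rcases List.mem_cons.1 hx with rfl | hx
    · simp [hR hxy hl.1]
    · exact List.mem_cons_of_mem _ (mem_of_isChain_of_rel hR hl.2 hlast hx hxy)

theorem eq_of_isChain_cons (hR : Relator.RightUnique R) {a : α} :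
    ∀ {l l' : List α}, (a :: l).IsChain R → (a :: l').IsChain R →
      (∀ x ∈ (a :: l).getLast?, ∀ b, ¬ R x b) → (∀ x ∈ (a :: l').getLast?, ∀ b, ¬ R x b) → l = l'
  | [], [], _, _, _, _ => rfl
  | [], b :: _, _, hl', hlast, _ => (hlast a rfl b (List.isChain_cons_cons.1 hl').1).elim
  | b :: _, [], hl, _, _, hlast' => (hlast' a rfl b (List.isChain_cons_cons.1 hl).1).elim
  | b :: l, b' :: l', hl, hl', hlast, hlast' => by
    rw [List.isChain_cons_cons] at hl hl'
    obtain rfl : b = b' := hR hl.1 hl'.1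
    rw [eq_of_isChain_cons hR hl.2 hl'.2 hlast hlast']

theorem transGen_self_of_rel (hR : Relator.LeftUnique R) {a b : α} (hab : R a b)
    (hb : TransGen R b b) : TransGen R a a := by
  obtain ⟨c, hbc, hcb⟩ := TransGen.tail'_iff.1 hb
  obtain rfl := hR hcb hab
  exact .head' hab hbc

theorem not_transGen_self_of_reflTransGen (hR : Relator.LeftUnique R) {a b : α}
    (ha : ∀ c, ¬ R c a) (hab : ReflTransGen R a b) : ¬ TransGen R b b := by
  induction hab with
  | refl =>
    intro h
    obtain ⟨c, -, hc⟩ := TransGen.tail'_iff.1 h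
    exact ha c hc
  | tail _ hbc ih => exact fun h ↦ ih (transGen_self_of_rel hR hbc h)

theorem eq_of_reflTransGen_of_forall_not_rel {a b : α} (hb : ∀ c, ¬ R c b)
    (hab : ReflTransGen R a b) : a = b := by
  rcases hab.cases_tail with h | ⟨c, -, hc⟩
  · exact h.symm
  · exact (hb c hc).elim

namespace IsMaximalChain

variable {l l' : List α} {a : α}

theorem exists_eq_cons (hl : IsMaximalChain R l) :
    ∃ a l', l = a :: l' ∧ (∀ b, ¬ R b a) ∧ ∀ x ∈ l, ReflTransGen R a x := by
  obtain ⟨a, l', rfl⟩ := List.exists_cons_of_ne_nil hl.ne_nil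
  exact ⟨a, l', rfl, hl.not_rel_head a rfl, fun x ↦ reflTransGen_of_isChain_cons hl.isChain⟩

theorem not_transGen_self (hR : Relator.LeftUnique R) (hl : IsMaximalChain R l) (ha : a ∈ l) :
    ¬ TransGen R a a := by
  obtain ⟨b, _, _, hb, hreach⟩ := hl.exists_eq_cons
  exact not_transGen_self_of_reflTransGen hR hb (hreach a ha)

theorem nodup (hR : Relator.LeftUnique R) (hl : IsMaximalChain R l) : l.Nodup := by
  have hpair : l.Pairwise (TransGen R) :=
    List.isChain_iff_pairwise.1 (hl.isChain.imp fun _ _ ↦ TransGen.single)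
  refine hpair.imp_of_mem fun ha _ hab heq ↦ ?_
  subst heq
  exact hl.not_transGen_self hR ha hab

theorem eq_of_mem (hR : Relator.BiUnique R) (hl : IsMaximalChain R l) (hl' : IsMaximalChain R l')
    (ha : a ∈ l) (ha' : a ∈ l') : l = l' := by
  obtain ⟨b, t, rfl, hb, hreach⟩ := hl.exists_eq_cons
  obtain ⟨b', t', rfl, hb', hreach'⟩ := hl'.exists_eq_cons
  obtain rfl : b = b' := by
    have hswap : Relator.RightUnique (Function.swap R) := fun _ _ _ h h' ↦ hR.1 h h'
    rcases ReflTransGen.total_of_right_unique hswap (reflTransGen_swap.2 (hreach a ha))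
      (reflTransGen_swap.2 (hreach' a ha')) with h | h
    · exact (eq_of_reflTransGen_of_forall_not_rel hb (reflTransGen_swap.1 h)).symm
    · exact eq_of_reflTransGen_of_forall_not_rel hb' (reflTransGen_swap.1 h)
  rw [eq_of_isChain_cons hR.2 hl.isChain hl'.isChain hl.not_getLast_rel hl'.not_getLast_rel]

theorem head?_eq_of_mem (hl : IsMaximalChain R l) (ha : a ∈ l) (hinit : ∀ b, ¬ R b a) :
    l.head? = some a := by
  obtain ⟨b, t, rfl, -, hreach⟩ := hl.exists_eq_cons
  rw [List.head?_cons, eq_of_reflTransGen_of_forall_not_rel hinit (hreach a ha)]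

theorem forall_mem {s : Set α} (hRs : ∀ x y, R x y → x ∈ s ∧ y ∈ s) (hl : IsMaximalChain R l)
    (hal : a ∈ l) (ha : a ∈ s) : ∀ x ∈ l, x ∈ s := by
  obtain ⟨b, t, rfl, -, hreach⟩ := hl.exists_eq_cons
  have hb : b ∈ s := by
    rcases (hreach a hal).cases_head with rfl | ⟨c, hbc, -⟩
    exacts [ha, (hRs b c hbc).1]
  intro x hx
  rcases (hreach x hx).cases_tail with rfl | ⟨c, -, hcx⟩
  exacts [hb, (hRs c x hcx).2]

end IsMaximalChain

theorem exists_reflTransGen_forall_not_rel (hR : Relator.LeftUnique R) {s : Set α} (hs : s.Finite)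
    (hRs : ∀ a b, R a b → b ∈ s) {a : α} (ha : a ∈ s) (hacyc : ¬ TransGen R a a) :
    ∃ b, ReflTransGen R a b ∧ ∀ c, ¬ R b c := by
  -- On the acyclic elements, being reachable is a strict order, hence well-founded on `s`.
  let r : α → α → Prop := fun x y ↦ TransGen R y x ∧ ¬ TransGen R y y
  have : IsStrictOrder α r :=
    { irrefl := fun _ h ↦ h.2 h.1
      trans := fun _ _ _ hxy hyz ↦ ⟨hyz.1.trans hxy.1, hyz.2⟩ }
  revert hacyc
  refine (hs.wellFoundedOn (r := r)).induction
    (P := fun x ↦ ¬ TransGen R x x → ∃ b, ReflTransGen R x b ∧ ∀ c, ¬ R b c) ha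
    fun x _ ih hx ↦ ?_
  by_cases hterm : ∃ c, R x c
  · obtain ⟨c, hxc⟩ := hterm
    obtain ⟨b, hcb, hb⟩ := ih c (hRs x c hxc) ⟨.single hxc, hx⟩
      fun hc ↦ hx (transGen_self_of_rel hR hxc hc)
    exact ⟨b, .head hxc hcb, hb⟩
  · exact ⟨x, .refl, not_exists.1 hterm⟩

theorem exists_isMaximalChain_mem (hR : Relator.BiUnique R) {s : Set α} (hs : s.Finite)
    (hRs : ∀ a b, R a b → a ∈ s ∧ b ∈ s) {a : α} (ha : a ∈ s) (hacyc : ¬ TransGen R a a) :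
    ∃ l, IsMaximalChain R l ∧ a ∈ l := by
  obtain ⟨t, hat, ht⟩ :=
    exists_reflTransGen_forall_not_rel hR.1 hs (fun x y h ↦ (hRs x y h).2) ha hacyc
  obtain ⟨h, hah, hh⟩ := exists_reflTransGen_forall_not_rel (R := Function.swap R)
    (fun _ _ _ h h' ↦ hR.2 h h') hs (fun x y h ↦ (hRs y x h).1) ha (mt transGen_swap.1 hacyc)
  rw [reflTransGen_swap] at hah
  obtain ⟨l, hl, hlast⟩ := List.exists_isChain_cons_of_relationReflTransGen (hah.trans hat)
  have hterm : ∀ x ∈ (h :: l).getLast?, ∀ b, ¬ R x b := by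
    simpa [List.getLast?_eq_some_getLast, hlast] using ht
  refine ⟨h :: l, ⟨List.cons_ne_nil _ _, hl, by simpa using hh, hterm⟩, ?_⟩
  clear hat hacyc ha
  induction hah with
  | refl => exact List.mem_cons_self
  | tail _ hxy ih => exact mem_of_isChain_of_rel hR.2 hl hterm ih hxy

theorem exists_isMaximalChain_mem_iff (hR : Relator.BiUnique R) {s : Set α} (hs : s.Finite)
    (hRs : ∀ a b, R a b → a ∈ s ∧ b ∈ s) {a : α} (ha : a ∈ s) :
    (∃ l, IsMaximalChain R l ∧ a ∈ l) ↔ ¬ TransGen R a a :=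
  ⟨fun ⟨_, hl, hal⟩ ↦ hl.not_transGen_self hR.1 hal, exists_isMaximalChain_mem hR hs hRs ha⟩

end MaximalChain

section EqvClasses

variable {α : Type*} {r : α → α → Prop} {S : Set α}

theorem mem_iff_of_eqvGen (hS : ∀ x y, r x y → (x ∈ S ↔ y ∈ S)) {a b : α} (h : EqvGen r a b) :
    a ∈ S ↔ b ∈ S := by
  induction h with
  | rel x y h => exact hS x y h
  | refl => rfl
  | symm _ _ _ ih => exact ih.symm
  | trans _ _ _ _ _ ih ih' => exact ih.trans ih'

theorem setOf_eqvGen_eq {a b : α} (h : EqvGen r a b) : {c | EqvGen r a c} = {c | EqvGen r b c} :=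
  Set.ext fun _ ↦ ⟨fun hc ↦ h.symm.trans _ _ _ hc, fun hc ↦ h.trans _ _ _ hc⟩

theorem mem_iff_mem_of_rel (hr : Relator.BiUnique r) (hsucc : ∀ x ∈ S, ∃ y ∈ S, r x y)
    (hpred : ∀ y ∈ S, ∃ x ∈ S, r x y) {a b : α} (hab : r a b) : a ∈ S ↔ b ∈ S := by
  constructor
  · intro ha
    obtain ⟨c, hc, hac⟩ := hsucc a ha
    rwa [hr.2 hab hac]
  · intro hb
    obtain ⟨c, hc, hcb⟩ := hpred b hb
    rwa [hr.1 hab hcb]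

/-- The classes, for the equivalence relation generated by `r`, of the elements of `S`. When `r` is
the graph of a bijection of a finite set `S`, these are the orbits of the resulting `ℤ`-action. -/
def eqvClasses (r : α → α → Prop) (S : Set α) : Set (Set α) :=
  {O | ∃ a ∈ S, O = {b | EqvGen r a b}}

theorem eq_of_mem_eqvClasses {O : Set α} (hO : O ∈ eqvClasses r S) {a : α} (ha : a ∈ O) :
    O = {b | EqvGen r a b} := by
  obtain ⟨c, -, rfl⟩ := hO
  exact setOf_eqvGen_eq ha

theorem nonempty_of_mem_eqvClasses {O : Set α} (hO : O ∈ eqvClasses r S) : O.Nonempty := by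
  obtain ⟨a, -, rfl⟩ := hO
  exact ⟨a, .refl a⟩

theorem finite_eqvClasses (hS : S.Finite) : (eqvClasses r S).Finite :=
  (hS.image fun a ↦ {b | EqvGen r a b}).subset fun _ ⟨a, ha, hO⟩ ↦ ⟨a, ha, hO.symm⟩

theorem pairwiseDisjoint_eqvClasses : (eqvClasses r S).PairwiseDisjoint id := by
  intro O hO O' hO' hne
  refine Set.disjoint_left.2 fun a ha ha' ↦ hne ?_
  exact (eq_of_mem_eqvClasses hO ha).trans (eq_of_mem_eqvClasses hO' ha').symm

variable (hr : ∀ x y, r x y → x ∈ S ∧ y ∈ S)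
include hr

theorem subset_of_mem_eqvClasses {O : Set α} (hO : O ∈ eqvClasses r S) : O ⊆ S := by
  obtain ⟨a, ha, rfl⟩ := hO
  exact fun b hb ↦ (mem_iff_of_eqvGen (fun x y h ↦ iff_of_true (hr x y h).1 (hr x y h).2) hb).1 ha

theorem sUnion_eqvClasses : ⋃₀ eqvClasses r S = S :=
  Set.Subset.antisymm (Set.sUnion_subset fun _ ↦ subset_of_mem_eqvClasses hr)
    fun a ha ↦ ⟨_, ⟨a, ha, rfl⟩, .refl a⟩

theorem finsum_mem_eqvClasses (hS : S.Finite) {M : Type*} [AddCommMonoid M] (f : α → M) :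
    ∑ᶠ O ∈ eqvClasses r S, ∑ᶠ a ∈ O, f a = ∑ᶠ a ∈ S, f a := by
  rw [← finsum_mem_sUnion pairwiseDisjoint_eqvClasses (finite_eqvClasses hS)
    fun O hO ↦ hS.subset (subset_of_mem_eqvClasses hr hO), sUnion_eqvClasses hr]

theorem finsum_ncard_eqvClasses (hS : S.Finite) : ∑ᶠ O ∈ eqvClasses r S, O.ncard = S.ncard := by
  simpa [finsum_one] using finsum_mem_eqvClasses hr hS fun _ ↦ (1 : ℕ)

end EqvClasses

section MaximalAntipaths

variable {Q : QuivRel} {st : SigmaTau Q} {a b : ℕ}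

/-- `Rel Q a b` says that the path `(a, b)` of length two is a relation of `Q`, so that antipaths of
positive length are the chains of `Rel Q` consisting of arrows. -/
abbrev Rel (Q : QuivRel) (a b : ℕ) : Prop := (a, b) ∈ Q.rel

namespace IsGentle

theorem src_mem (hQ : IsGentle Q) (ha : a ∈ Q.A) : Q.src a ∈ Q.V := (hQ.2.1 a ha).1

theorem tgt_mem (hQ : IsGentle Q) (ha : a ∈ Q.A) : Q.tgt a ∈ Q.V := (hQ.2.1 a ha).2

theorem connected (hQ : IsGentle Q) : Connected Q := hQ.2.2.1

theorem mem_arrows_of_rel (hQ : IsGentle Q) (h : Rel Q a b) : a ∈ Q.A ∧ b ∈ Q.A :=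
  ⟨(hQ.2.2.2.1 _ h).1, (hQ.2.2.2.1 _ h).2.1⟩

theorem src_eq_tgt_of_rel (hQ : IsGentle Q) (h : Rel Q a b) : Q.src a = Q.tgt b :=
  (hQ.2.2.2.1 _ h).2.2

theorem rel_iff (hQ : IsGentle Q) (st : SigmaTau Q) :
    Rel Q a b ↔ a ∈ Q.A ∧ b ∈ Q.A ∧ Q.src a = Q.tgt b ∧ st.σ a = st.τ b := by
  constructor
  · intro h
    obtain ⟨ha, hb⟩ := hQ.mem_arrows_of_rel h
    have hab := hQ.src_eq_tgt_of_rel h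
    exact ⟨ha, hb, hab, (st.rel_iff a ha b hb hab).1 h⟩
  · rintro ⟨ha, hb, hab, hsign⟩
    exact (st.rel_iff a ha b hb hab).2 hsign

theorem biUnique_rel (hQ : IsGentle Q) : Relator.BiUnique (Rel Q) := by
  obtain ⟨-, -, -, -, -, -, -, -, hpred, hsucc, -⟩ := id hQ
  constructor
  · intro a b c hac hbc
    have hcard := hpred c (hQ.mem_arrows_of_rel hac).2
    exact Finset.card_le_one.1 hcard a (Finset.mem_filter.2 ⟨(hQ.mem_arrows_of_rel hac).1, hac⟩)
      b (Finset.mem_filter.2 ⟨(hQ.mem_arrows_of_rel hbc).1, hbc⟩)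
  · intro a b c hab hac
    have hcard := hsucc a (hQ.mem_arrows_of_rel hab).1
    exact Finset.card_le_one.1 hcard b (Finset.mem_filter.2 ⟨(hQ.mem_arrows_of_rel hab).2, hab⟩)
      c (Finset.mem_filter.2 ⟨(hQ.mem_arrows_of_rel hac).2, hac⟩)

end IsGentle

theorem SigmaTau.injOn_src_σ (st : SigmaTau Q) :
    Set.InjOn (fun a ↦ (Q.src a, st.σ a)) Q.A := by
  intro a ha b hb hab
  obtain ⟨hsrc, hσ⟩ := Prod.mk.inj hab
  by_contra hne
  have hneg : st.σ b = -st.σ b := hσ.symm.trans (st.σ_src a ha b hb hne hsrc)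
  rcases st.σ_pm b hb with h | h <;> lia

theorem SigmaTau.injOn_tgt_τ (st : SigmaTau Q) :
    Set.InjOn (fun a ↦ (Q.tgt a, st.τ a)) Q.A := by
  intro a ha b hb hab
  obtain ⟨htgt, hτ⟩ := Prod.mk.inj hab
  by_contra hne
  have hneg : st.τ b = -st.τ b := hτ.symm.trans (st.τ_tgt a ha b hb hne htgt)
  rcases st.τ_pm b hb with h | h <;> lia

theorem not_exists_arrow_tgt_iff (hQ : IsGentle Q) (ha : a ∈ Q.A) :
    (¬ ∃ b ∈ Q.A, Q.src b = Q.tgt a ∧ st.σ b = st.τ a) ↔ ∀ b, ¬ Rel Q b a := by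
  simp [hQ.rel_iff st, ha]

theorem not_exists_arrow_src_iff (hQ : IsGentle Q) (ha : a ∈ Q.A) :
    (¬ ∃ b ∈ Q.A, Q.tgt b = Q.src a ∧ st.τ b = st.σ a) ↔ ∀ b, ¬ Rel Q a b := by
  simp [hQ.rel_iff st, ha, eq_comm]

theorem inN_arrows_iff (hQ : IsGentle Q) {l : List ℕ} :
    InN Q st (.arrows l) ↔ (∀ a ∈ l, a ∈ Q.A) ∧ IsMaximalChain (Rel Q) l := by
  rcases eq_or_ne l [] with rfl | hne
  · exact iff_of_false (fun h ↦ h.1.1 rfl) fun h ↦ h.2.ne_nil rfl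
  have hhead := List.head?_eq_some_head hne
  have hlast := List.getLast?_eq_some_getLast hne
  have hinit (hA : ∀ a ∈ l, a ∈ Q.A) := not_exists_arrow_tgt_iff (st := st) hQ
    (hA _ (List.head_mem hne))
  have hfinal (hA : ∀ a ∈ l, a ∈ Q.A) := not_exists_arrow_src_iff (st := st) hQ
    (hA _ (List.getLast_mem hne))
  simp only [InN, IsAntiThread, Thread.target, Thread.tauAnti, Thread.source, Thread.sigma,
    List.head!_of_head? hhead, List.getLast!_of_getLast? hlast]
  constructor
  · rintro ⟨⟨-, hA, hchain⟩, hh, hl⟩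
    refine ⟨hA, hne, hchain, ?_, ?_⟩
    · rw [hhead]
      rintro _ ⟨⟩
      exact (hinit hA).1 hh
    · rw [hlast]
      rintro _ ⟨⟩
      exact (hfinal hA).1 hl
  · rintro ⟨hA, hl⟩
    exact ⟨⟨hne, hA, hl.isChain⟩, (hinit hA).2 (hl.not_rel_head _ hhead),
      (hfinal hA).2 (hl.not_getLast_rel _ hlast)⟩

theorem exists_inN_mem_iff (hQ : IsGentle Q) (ha : a ∈ Q.A) :
    (∃ l, InN Q st (.arrows l) ∧ a ∈ l) ↔ ¬ TransGen (Rel Q) a a := by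
  have hrel (x y : ℕ) (h : Rel Q x y) : x ∈ (Q.A : Set ℕ) ∧ y ∈ (Q.A : Set ℕ) :=
    hQ.mem_arrows_of_rel h
  rw [← exists_isMaximalChain_mem_iff hQ.biUnique_rel Q.A.finite_toSet hrel ha]
  refine exists_congr fun l ↦ and_congr_left fun hal ↦ ?_
  rw [inN_arrows_iff hQ, and_iff_right_iff_imp]
  exact fun hl ↦ hl.forall_mem hrel hal ha

theorem inC_iff (hQ : IsGentle Q) : InC Q st a ↔ TransGen (Rel Q) a a := by
  rw [InC, and_congr_right fun ha ↦ by rw [exists_inN_mem_iff hQ ha, not_not],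
    and_iff_right_iff_imp]
  intro h
  obtain ⟨b, hab, -⟩ := TransGen.head'_iff.1 h
  exact (hQ.mem_arrows_of_rel hab).1

/-- The pairs of a vertex and a sign from which no arrow departs: the possible ends of a maximal
antipath, see `bijOn_tgtEnd`. -/
def freeEnds (Q : QuivRel) (st : SigmaTau Q) : Finset (ℕ × ℤ) :=
  (Q.V ×ˢ {1, -1}) \ Q.A.image fun a ↦ (Q.src a, st.σ a)

theorem mem_freeEnds {x : ℕ} {ε : ℤ} : (x, ε) ∈ freeEnds Q st ↔
    (x ∈ Q.V ∧ (ε = 1 ∨ ε = -1)) ∧ ¬ ∃ a ∈ Q.A, Q.src a = x ∧ st.σ a = ε := by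
  simp [freeEnds]

theorem card_freeEnds_add_card (hQ : IsGentle Q) (st : SigmaTau Q) :
    (freeEnds Q st).card + Q.A.card = 2 * Q.V.card := by
  have hsub : (Q.A.image fun a ↦ (Q.src a, st.σ a)) ⊆ Q.V ×ˢ {1, -1} := by
    intro y hy
    obtain ⟨a, ha, rfl⟩ := Finset.mem_image.1 hy
    simpa using ⟨hQ.src_mem ha, st.σ_pm a ha⟩
  rw [freeEnds, ← Finset.card_image_of_injOn st.injOn_src_σ,
    Finset.card_sdiff_add_card_eq_card hsub, Finset.card_product, Finset.card_pair (by decide),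
    mul_comm]

/-- The terminus of an antipath, together with its sign `τ`; it determines a maximal antipath. -/
def Thread.tgtEnd (st : SigmaTau Q) (w : Thread) : ℕ × ℤ := (w.target Q, w.tauAnti st)

theorem tgtEnd_mem_freeEnds (hQ : IsGentle Q) {w : Thread} (hw : InN Q st w) :
    w.tgtEnd st ∈ freeEnds Q st := by
  refine mem_freeEnds.2 ⟨?_, hw.2.1⟩
  cases w with
  | triv x ε => exact hw.1
  | arrows l =>
    have hmem := hw.1.2.1 _ (List.head!_mem_self hw.1.1)
    exact ⟨hQ.tgt_mem hmem, st.τ_pm _ hmem⟩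

theorem injOn_tgtEnd (hQ : IsGentle Q) : Set.InjOn (Thread.tgtEnd st) {w | InN Q st w} := by
  rintro (⟨x, ε⟩ | l) hw (⟨x', ε'⟩ | l') hw' h <;> obtain ⟨hx, hε⟩ := Prod.mk.inj h
  · exact congrArg₂ _ hx hε
  · exact (hw.2.2 ⟨_, hw'.1.2.1 _ (List.head!_mem_self hw'.1.1), hx.symm, hε.symm⟩).elim
  · exact (hw'.2.2 ⟨_, hw.1.2.1 _ (List.head!_mem_self hw.1.1), hx, hε⟩).elim
  · have hmem := List.head!_mem_self hw.1.1
    have hmem' := List.head!_mem_self hw'.1.1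
    have hhead : l.head! = l'.head! :=
      st.injOn_tgt_τ (hw.1.2.1 _ hmem) (hw'.1.2.1 _ hmem') h
    rw [((inN_arrows_iff hQ).1 hw).2.eq_of_mem hQ.biUnique_rel ((inN_arrows_iff hQ).1 hw').2
      hmem (hhead ▸ hmem')]

theorem surjOn_tgtEnd (hQ : IsGentle Q) :
    Set.SurjOn (Thread.tgtEnd st) {w | InN Q st w} (freeEnds Q st) := by
  rintro ⟨x, ε⟩ hx
  obtain ⟨hxε, hfree⟩ := mem_freeEnds.1 hx
  by_cases hb : ∃ b ∈ Q.A, Q.tgt b = x ∧ st.τ b = ε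
  · obtain ⟨b, hbA, rfl, rfl⟩ := hb
    have hinit := (not_exists_arrow_tgt_iff hQ hbA).1 hfree
    obtain ⟨l, hl, hbl⟩ := (exists_inN_mem_iff (st := st) hQ hbA).2
      (not_transGen_self_of_reflTransGen hQ.biUnique_rel.1 hinit .refl)
    have hhead := List.head!_of_head? (((inN_arrows_iff hQ).1 hl).2.head?_eq_of_mem hbl hinit)
    exact ⟨.arrows l, hl, by simp only [Thread.tgtEnd, Thread.target, Thread.tauAnti, hhead]⟩
  · exact ⟨.triv x ε, ⟨hxε, hfree, hb⟩, rfl⟩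

theorem bijOn_tgtEnd (hQ : IsGentle Q) :
    Set.BijOn (Thread.tgtEnd st) {w | InN Q st w} (freeEnds Q st) :=
  ⟨fun _ ↦ tgtEnd_mem_freeEnds hQ, injOn_tgtEnd hQ, surjOn_tgtEnd hQ⟩

theorem finite_setOf_inN (hQ : IsGentle Q) : {w | InN Q st w}.Finite :=
  (bijOn_tgtEnd hQ).finite_iff_finite.2 (freeEnds Q st).finite_toSet

theorem ncard_setOf_inN_add_card (hQ : IsGentle Q) :
    {w | InN Q st w}.ncard + Q.A.card = 2 * Q.V.card := by
  rw [(bijOn_tgtEnd hQ).ncard_eq, Set.ncard_coe_finset, card_freeEnds_add_card hQ]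

/-- The arrows occurring in a thread; the supports of the maximal antipaths partition `Δ₁ ∖ 𝒞`. -/
def Thread.support : Thread → Finset ℕ
  | .triv _ _ => ∅
  | .arrows l => l.toFinset

theorem mem_support_iff {w : Thread} :
    a ∈ w.support ↔ ∃ l, w = .arrows l ∧ a ∈ l := by
  cases w <;> simp [Thread.support]

theorem card_support (hQ : IsGentle Q) {w : Thread} (hw : InN Q st w) :
    w.support.card = w.len := by
  cases w with
  | triv => rfl
  | arrows l =>
    exact List.toFinset_card_of_nodup (((inN_arrows_iff hQ).1 hw).2.nodup hQ.biUnique_rel.1)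

theorem pairwiseDisjoint_support (hQ : IsGentle Q) :
    {w | InN Q st w}.PairwiseDisjoint fun w ↦ (w.support : Set ℕ) := by
  intro w hw w' hw' hne
  refine Set.disjoint_left.2 fun a ha ha' ↦ hne ?_
  obtain ⟨l, rfl, hal⟩ := mem_support_iff.1 ha
  obtain ⟨l', rfl, hal'⟩ := mem_support_iff.1 ha'
  rw [((inN_arrows_iff hQ).1 hw).2.eq_of_mem hQ.biUnique_rel ((inN_arrows_iff hQ).1 hw').2 hal hal']

theorem biUnion_support :
    ⋃ w ∈ {w | InN Q st w}, (w.support : Set ℕ) = ↑Q.A \ {a | InC Q st a} := by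
  ext a
  simp only [Set.mem_iUnion, Set.mem_sdiff, Set.mem_ofPred_eq, Finset.mem_coe, InC, not_and,
    not_not, mem_support_iff, exists_prop]
  constructor
  · rintro ⟨_, hw, l, rfl, hal⟩
    exact ⟨hw.1.2.1 a hal, fun _ ↦ ⟨l, hw, hal⟩⟩
  · rintro ⟨ha, h⟩
    obtain ⟨l, hl, hal⟩ := h ha
    exact ⟨_, hl, l, rfl, hal⟩

theorem finsum_len_add_ncard_setOf_inC (hQ : IsGentle Q) :
    ∑ᶠ w ∈ {w | InN Q st w}, w.len + {a | InC Q st a}.ncard = Q.A.card := by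
  have hsub : {a | InC Q st a} ⊆ Q.A := fun _ ha ↦ ha.1
  have hlen : ∑ᶠ w ∈ {w | InN Q st w}, w.len = ((Q.A : Set ℕ) \ {a | InC Q st a}).ncard := by
    rw [← biUnion_support, (finite_setOf_inN hQ).ncard_biUnion (fun w _ ↦ w.support.finite_toSet)
      (pairwiseDisjoint_support hQ)]
    exact finsum_mem_congr rfl fun w hw ↦ by rw [Set.ncard_coe_finset, card_support hQ hw]
  rw [hlen, Set.ncard_sdiff_add_ncard_of_subset hsub, Set.ncard_coe_finset]

end MaximalAntipaths

section Invariants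

variable {Q : QuivRel} {st : SigmaTau Q}

theorem finite_setOf_inC : {a | InC Q st a}.Finite :=
  Q.A.finite_toSet.subset fun _ ha ↦ ha.1

theorem setOf_nOrbit : {O | NOrbit Q st O} = eqvClasses (PhiRel Q st) {w | InN Q st w} := rfl

theorem setOf_cOrbit : {O | COrbit Q st O} = eqvClasses (PsiRel Q st) {a | InC Q st a} := rfl

/-- The multiset of the pairs `(p(𝒪), q(𝒪))` over the orbits `𝒪 ∈ 𝒩/ℤ ⊔ 𝒞/ℤ`, of which `f_𝚫` is the
multiplicity function. -/
noncomputable def invariants (Q : QuivRel) (st : SigmaTau Q) : Multiset (ℕ × ℕ) :=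
  ∑ᶠ O ∈ {O | NOrbit Q st O}, {(pN O, qN O)} + ∑ᶠ O ∈ {O | COrbit Q st O}, {(0, O.ncard)}

theorem map_invariants (hQ : IsGentle Q) {M : Type*} [AddCommMonoid M]
    (g : Multiset (ℕ × ℕ) →+ M) : g (invariants Q st) =
      ∑ᶠ O ∈ {O | NOrbit Q st O}, g {(pN O, qN O)} +
        ∑ᶠ O ∈ {O | COrbit Q st O}, g {(0, O.ncard)} := by
  rw [invariants, map_add, setOf_nOrbit, setOf_cOrbit,
    g.map_finsum_mem _ (finite_eqvClasses (finite_setOf_inN hQ)),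
    g.map_finsum_mem _ (finite_eqvClasses finite_setOf_inC)]

theorem finsum_mem_ite_one {α : Type*} (s : Set α) (p : α → Prop) [DecidablePred p] :
    ∑ᶠ a ∈ s, (if p a then 1 else 0) = {a ∈ s | p a}.ncard := by
  rw [← finsum_one]
  refine finsum_congr fun a ↦ ?_
  by_cases ha : a ∈ s <;> by_cases hp : p a <;> simp [ha, hp]

theorem count_invariants (hQ : IsGentle Q) (x : ℕ × ℕ) :
    (invariants Q st).count x = fInv Q st x := by
  rw [← Multiset.coe_countAddMonoidHom, map_invariants hQ]
  simp only [Multiset.coe_countAddMonoidHom, Multiset.count_singleton, finsum_mem_ite_one]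
  simp [fInv, Prod.ext_iff, eq_comm]

theorem fst_sum_invariants (hQ : IsGentle Q) :
    (invariants Q st).sum.1 = {w | InN Q st w}.ncard := by
  have h := map_invariants (st := st) hQ ((AddMonoidHom.fst ℕ ℕ).comp Multiset.sumAddMonoidHom)
  simp only [AddMonoidHom.comp_apply, Multiset.coe_sumAddMonoidHom, Multiset.sum_singleton,
    AddMonoidHom.coe_fst, finsum_zero, add_zero] at h
  rw [h]
  exact finsum_ncard_eqvClasses (fun _ _ h ↦ ⟨h.1, h.2.1⟩) (finite_setOf_inN hQ)

theorem snd_sum_invariants (hQ : IsGentle Q) : (invariants Q st).sum.2 = Q.A.card := by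
  have h := map_invariants (st := st) hQ ((AddMonoidHom.snd ℕ ℕ).comp Multiset.sumAddMonoidHom)
  simp only [AddMonoidHom.comp_apply, Multiset.coe_sumAddMonoidHom, Multiset.sum_singleton,
    AddMonoidHom.coe_snd] at h
  rw [h, ← finsum_len_add_ncard_setOf_inC (st := st) hQ]
  congr 1
  · exact finsum_mem_eqvClasses (fun _ _ h ↦ ⟨h.1, h.2.1⟩) (finite_setOf_inN hQ) Thread.len
  · exact finsum_ncard_eqvClasses (fun _ _ h ↦ ⟨h.1, h.2.1⟩) finite_setOf_inC

theorem fst_sum_invariants_add_card (hQ : IsGentle Q) :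
    (invariants Q st).sum.1 + Q.A.card = 2 * Q.V.card := by
  rw [fst_sum_invariants hQ, ncard_setOf_inN_add_card hQ]

end Invariants

section Triangles

variable {Q : QuivRel} {st : SigmaTau Q}

theorem psiRel_iff (hQ : IsGentle Q) {a b : ℕ} :
    PsiRel Q st a b ↔ InC Q st a ∧ InC Q st b ∧ Rel Q a b := by
  rw [PsiRel, and_congr_right fun ha ↦ and_congr_right fun hb ↦ ?_]
  rw [hQ.rel_iff st, eq_comm, @eq_comm ℤ]
  exact ⟨fun h ↦ ⟨ha.1, hb.1, h⟩, fun h ↦ h.2.2⟩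

theorem InC.right_of_rel (hQ : IsGentle Q) {a b : ℕ} (ha : InC Q st a) (hab : Rel Q a b) :
    InC Q st b := by
  rw [inC_iff hQ] at ha ⊢
  obtain ⟨c, hac, hca⟩ := TransGen.head'_iff.1 ha
  obtain rfl := hQ.biUnique_rel.2 hab hac
  exact .tail' hca hab

theorem COrbit.subset_of_mem (hQ : IsGentle Q) {O : Set ℕ} (hO : COrbit Q st O) {S : Set ℕ}
    (hsucc : ∀ x ∈ S, ∃ y ∈ S, Rel Q x y) (hpred : ∀ y ∈ S, ∃ x ∈ S, Rel Q x y)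
    {a : ℕ} (haO : a ∈ O) (haS : a ∈ S) : O ⊆ S := by
  rw [eq_of_mem_eqvClasses hO haO]
  intro b hb
  refine (mem_iff_of_eqvGen (fun x y hxy ↦ ?_) hb).1 haS
  exact mem_iff_mem_of_rel hQ.biUnique_rel hsucc hpred ((psiRel_iff hQ).1 hxy).2.2

theorem TriangleSet.cOrbit (hQ : IsGentle Q) {T : Finset ℕ} (hT : TriangleSet Q T) :
    COrbit Q st T := by
  obtain ⟨a, b, c, rfl, -, hab, hbc, hca⟩ := hT
  have ha : InC Q st a := (inC_iff hQ).2 (.head hab (.head hbc (.single hca)))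
  have hb := ha.right_of_rel hQ hab
  have hc := hb.right_of_rel hQ hbc
  let O : Set ℕ := {x | EqvGen (PsiRel Q st) a x}
  have hO : COrbit Q st O := ⟨a, ha, rfl⟩
  have haO : a ∈ O := .refl a
  have hbO : b ∈ O := .rel _ _ ((psiRel_iff hQ).2 ⟨ha, hb, hab⟩)
  have hcO : c ∈ O := .trans _ _ _ hbO (.rel _ _ ((psiRel_iff hQ).2 ⟨hb, hc, hbc⟩))
  suffices (({a, b, c} : Finset ℕ) : Set ℕ) = O by rwa [this]
  refine Set.Subset.antisymm ?_ (hO.subset_of_mem hQ ?_ ?_ haO ?_)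
  · simp [Set.insert_subset_iff, haO, hbO, hcO]
  · simp [hab, hbc, hca]
  · simp [hab, hbc, hca]
  · simp

theorem TriangleSet.card_eq_three {T : Finset ℕ} (hT : TriangleSet Q T) : T.card = 3 := by
  obtain ⟨a, b, c, rfl, ⟨-, -, -, hab, hbc, hac, -⟩, -⟩ := hT
  exact Finset.card_eq_three.2 ⟨a, b, c, hab, hac, hbc, rfl⟩

theorem TriangleSet.subset {T : Finset ℕ} (hT : TriangleSet Q T) : T ⊆ Q.A := by
  obtain ⟨a, b, c, rfl, ⟨ha, hb, hc, -⟩, -⟩ := hT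
  simp [Finset.insert_subset_iff, ha, hb, hc]

theorem triangleSet_of_rel (hQ : IsGentle Q) {a b c : ℕ} (hne : a ≠ b ∧ b ≠ c ∧ a ≠ c)
    (hab : Rel Q a b) (hbc : Rel Q b c) (hca : Rel Q c a) : TriangleSet Q {a, b, c} :=
  ⟨a, b, c, rfl, ⟨(hQ.mem_arrows_of_rel hab).1, (hQ.mem_arrows_of_rel hbc).1,
    (hQ.mem_arrows_of_rel hca).1, hne.1, hne.2.1, hne.2.2, hQ.src_eq_tgt_of_rel hab,
    hQ.src_eq_tgt_of_rel hbc, hQ.src_eq_tgt_of_rel hca⟩, hab, hbc, hca⟩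

theorem COrbit.exists_rel (hQ : IsGentle Q) {O : Set ℕ} (hO : COrbit Q st O) {a : ℕ} (ha : a ∈ O) :
    ∃ b ∈ O, Rel Q a b := by
  have haC : InC Q st a := subset_of_mem_eqvClasses (fun _ _ h ↦ ⟨h.1, h.2.1⟩) hO ha
  obtain ⟨b, hab, -⟩ := TransGen.head'_iff.1 ((inC_iff hQ).1 haC)
  refine ⟨b, ?_, hab⟩
  rw [eq_of_mem_eqvClasses hO ha]
  exact .rel _ _ ((psiRel_iff hQ).2 ⟨haC, haC.right_of_rel hQ hab, hab⟩)

theorem COrbit.exists_triangleSet (hQ : IsGentle Q) {O : Set ℕ} (hO : COrbit Q st O)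
    (hcard : O.ncard = 3) : ∃ T : Finset ℕ, TriangleSet Q T ∧ (T : Set ℕ) = O := by
  obtain ⟨a, ha⟩ := nonempty_of_mem_eqvClasses hO
  obtain ⟨b, hb, hab⟩ := hO.exists_rel hQ ha
  obtain ⟨c, hc, hbc⟩ := hO.exists_rel hQ hb
  obtain ⟨d, hd, hcd⟩ := hO.exists_rel hQ hc
  have hne_ab : a ≠ b := by
    rintro rfl
    have hsub : O ⊆ {a} := hO.subset_of_mem hQ (by simp [hab]) (by simp [hab]) ha rfl
    have := Set.ncard_le_ncard hsub
    simp [hcard] at this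
  have hne_ac : a ≠ c := by
    rintro rfl
    have hsub : O ⊆ {a, b} :=
      hO.subset_of_mem hQ (by simp [hab, hbc]) (by simp [hab, hbc]) ha (Set.mem_insert a _)
    have := (Set.ncard_le_ncard hsub).trans (Set.ncard_insert_le a {b})
    simp [hcard] at this
  have hne_bc : b ≠ c := by
    rintro rfl
    exact hne_ab (hQ.biUnique_rel.1 hab hbc)
  have hO_eq : (({a, b, c} : Finset ℕ) : Set ℕ) = O := by
    refine Set.eq_of_subset_of_ncard_le ?_ ?_ (Set.finite_of_ncard_ne_zero (by simp [hcard]))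
    · simp [Set.insert_subset_iff, ha, hb, hc]
    · rw [hcard, Set.ncard_coe_finset,
        Finset.card_eq_three.2 ⟨a, b, c, hne_ab, hne_ac, hne_bc, rfl⟩]
  obtain rfl : d = a := by
    have hd' : d = a ∨ d = b ∨ d = c := by simpa [← hO_eq] using hd
    rcases hd' with h | rfl | rfl
    · exact h
    · exact (hne_ac (hQ.biUnique_rel.1 hab hcd)).elim
    · exact (hne_bc (hQ.biUnique_rel.1 hbc hcd)).elim
  exact ⟨{d, b, c}, triangleSet_of_rel hQ ⟨hne_ab, hne_bc, hne_ac⟩ hab hbc hcd, hO_eq⟩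

theorem TriangleSet.eq_of_mem (hQ : IsGentle Q) (st : SigmaTau Q) {T T' : Finset ℕ}
    (hT : TriangleSet Q T) (hT' : TriangleSet Q T') {a : ℕ} (ha : a ∈ T) (ha' : a ∈ T') :
    T = T' :=
  Finset.coe_injective <| (eq_of_mem_eqvClasses (hT.cOrbit (st := st) hQ) ha).trans
    (eq_of_mem_eqvClasses (hT'.cOrbit (st := st) hQ) ha').symm

theorem fInv_zero_three (hQ : IsGentle Q) :
    fInv Q st (0, 3) = {T | TriangleSet Q T}.ncard := by
  have hN : {O | NOrbit Q st O ∧ pN O = 0 ∧ qN O = 3} = ∅ := by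
    refine Set.eq_empty_of_forall_notMem ?_
    rintro O ⟨hO, hp, -⟩
    have hfin : O.Finite := (finite_setOf_inN hQ).subset
      (subset_of_mem_eqvClasses (fun _ _ h ↦ ⟨h.1, h.2.1⟩) hO)
    exact (nonempty_of_mem_eqvClasses hO).ne_empty ((Set.ncard_eq_zero hfin).1 hp)
  have hC : {O | COrbit Q st O ∧ 0 = 0 ∧ O.ncard = 3} =
      (fun T : Finset ℕ ↦ (T : Set ℕ)) '' {T | TriangleSet Q T} := by
    ext O
    constructor
    · rintro ⟨hO, -, hcard⟩
      exact hO.exists_triangleSet hQ hcard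
    · rintro ⟨T, hT, rfl⟩
      exact ⟨hT.cOrbit hQ, rfl, by rw [Set.ncard_coe_finset, hT.card_eq_three]⟩
  rw [fInv, hN, hC, Set.ncard_empty, zero_add, Set.ncard_image_of_injective _ Finset.coe_injective]

theorem ClassAtilde.card_add_ncard_triangleSet (hA : ClassAtilde Q st) :
    Q.V.card + {T | TriangleSet Q T}.ncard = Q.A.card := by
  obtain ⟨hQ, m₁, m₂, p, q, hp, hq, hf⟩ := hA
  have hinv : invariants Q st =
      Multiset.replicate (m₁ + m₂) (0, 3) + {(p + m₁, p)} + {(q + m₂, q)} := by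
    ext x
    rw [count_invariants hQ, hf]
    simp [charFn, Multiset.count_replicate, Multiset.count_singleton, eq_comm]
  have htriangles : {T | TriangleSet Q T}.ncard = m₁ + m₂ := by
    rw [← fInv_zero_three (st := st) hQ, hf]
    simp [charFn, hp.ne, hq.ne]
  have hfst := fst_sum_invariants_add_card (st := st) hQ
  have hsnd := snd_sum_invariants (st := st) hQ
  simp only [hinv, Multiset.sum_add, Multiset.sum_replicate, Multiset.sum_singleton, Prod.fst_add,
    Prod.snd_add, Prod.smul_fst, Prod.smul_snd, smul_eq_mul] at hfst hsnd
  lia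

end Triangles

section DeleteArrows

variable {Q : QuivRel} {S : Finset ℕ}

theorem connected_deleteArrows (hQ : Connected Q)
    (hS : ∀ a ∈ S, ReflTransGen (Adj (deleteArrows Q S)) (Q.src a) (Q.tgt a)) :
    Connected (deleteArrows Q S) := by
  have : Std.Symm (Adj (deleteArrows Q S)) := ⟨fun _ _ ⟨a, ha, h⟩ ↦ ⟨a, ha, h.symm⟩⟩
  have hreach : ∀ a ∈ Q.A, ReflTransGen (Adj (deleteArrows Q S)) (Q.src a) (Q.tgt a) := by
    intro a ha
    by_cases haS : a ∈ S
    · exact hS a haS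
    · exact .single ⟨a, Finset.mem_sdiff.2 ⟨ha, haS⟩, .inl ⟨rfl, rfl⟩⟩
  have hadj : Adj Q ≤ ReflTransGen (Adj (deleteArrows Q S)) := by
    rintro u v ⟨a, ha, ⟨rfl, rfl⟩ | ⟨rfl, rfl⟩⟩
    exacts [hreach a ha, symm (hreach a ha)]
  exact fun x hx y hy ↦ reflTransGen_closed hadj _ _ (hQ x hx y hy)

theorem connected_deleteArrows_of_isTriangleTriple (hQ : Connected Q)
    (hS : ∀ a ∈ S, ∃ b ∉ S, ∃ c ∉ S, IsTriangleTriple Q a b c) : Connected (deleteArrows Q S) := by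
  refine connected_deleteArrows hQ fun a ha ↦ ?_
  obtain ⟨b, hbS, c, hcS, ⟨-, hb, hc, -, -, -, hab, hbc, hca⟩, -⟩ := hS a ha
  have hb' : Adj (deleteArrows Q S) (Q.tgt b) (Q.src b) :=
    ⟨b, Finset.mem_sdiff.2 ⟨hb, hbS⟩, .inr ⟨rfl, rfl⟩⟩
  have hc' : Adj (deleteArrows Q S) (Q.tgt c) (Q.src c) :=
    ⟨c, Finset.mem_sdiff.2 ⟨hc, hcS⟩, .inr ⟨rfl, rfl⟩⟩
  rw [hab, ← hca]
  exact .head hb' (.single (hbc ▸ hc'))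

theorem TriangleSet.exists_isTriangleTriple {T : Finset ℕ} (hT : TriangleSet Q T) {a : ℕ}
    (ha : a ∈ T) : ∃ b ∈ T, ∃ c ∈ T, IsTriangleTriple Q a b c := by
  obtain ⟨x, y, z, rfl, hxyz⟩ := hT
  have hrot {x y z : ℕ} : IsTriangleTriple Q x y z → IsTriangleTriple Q y z x :=
    fun ⟨⟨hx, hy, hz, hxy, hyz, hxz, h₁, h₂, h₃⟩, hr₁, hr₂, hr₃⟩ ↦
      ⟨⟨hy, hz, hx, hyz, hxz.symm, hxy.symm, h₂, h₃, h₁⟩, hr₂, hr₃, hr₁⟩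
  simp only [Finset.mem_insert, Finset.mem_singleton] at ha
  rcases ha with rfl | rfl | rfl
  · exact ⟨y, by simp, z, by simp, hxyz⟩
  · exact ⟨z, by simp, x, by simp, hrot hxyz⟩
  · exact ⟨x, by simp, y, by simp, hrot (hrot hxyz)⟩

theorem connected_deleteArrows_image {ι : Type*} [Fintype ι] {O : ι → Finset ℕ} {α : ι → ℕ}
    (hQ : Connected Q) (hO : ∀ i, TriangleSet Q (O i)) (hα : ∀ i, α i ∈ O i)
    (hαO : ∀ i j, α j ∈ O i → j = i) : Connected (deleteArrows Q (Finset.univ.image α)) := by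
  refine connected_deleteArrows_of_isTriangleTriple hQ ?_
  have hkept : ∀ i, ∀ b ∈ O i, α i ≠ b → b ∉ Finset.univ.image α := by
    intro i b hb hne hbα
    obtain ⟨j, -, rfl⟩ := Finset.mem_image.1 hbα
    exact hne (congrArg α (hαO i j hb).symm)
  intro a ha
  obtain ⟨i, -, rfl⟩ := Finset.mem_image.1 ha
  obtain ⟨b, hb, c, hc, habc⟩ := (hO i).exists_isTriangleTriple (hα i)
  obtain ⟨-, -, -, hab, -, hac, -⟩ := habc.1
  exact ⟨b, hkept i b hb hab, c, hkept i c hc hac, habc⟩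

theorem isGentle_deleteArrows (hQ : IsGentle Q) (hconn : Connected (deleteArrows Q S)) :
    IsGentle (deleteArrows Q S) := by
  obtain ⟨hV, hends, -, hrel, hout, hin, hprev, hnext, hpred, hsucc, n, hn⟩ := hQ
  have hA {a : ℕ} : a ∈ (deleteArrows Q S).A ↔ a ∈ Q.A ∧ a ∉ S := Finset.mem_sdiff
  have hR {a b : ℕ} : (a, b) ∈ (deleteArrows Q S).rel ↔ (a, b) ∈ Q.rel ∧ a ∉ S ∧ b ∉ S :=
    Finset.mem_filter
  have hR' {a b : ℕ} (ha : a ∈ (deleteArrows Q S).A) (hb : b ∈ (deleteArrows Q S).A) :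
      (a, b) ∈ (deleteArrows Q S).rel ↔ (a, b) ∈ Q.rel :=
    hR.trans (and_iff_left ⟨(hA.1 ha).2, (hA.1 hb).2⟩)
  have hle {P P' : ℕ → Prop} [DecidablePred P] [DecidablePred P']
      (hP : ∀ a ∈ (deleteArrows Q S).A, P' a → P a) {k : ℕ} (hk : (Q.A.filter P).card ≤ k) :
      ((deleteArrows Q S).A.filter P').card ≤ k := by
    refine (Finset.card_le_card fun a ha ↦ ?_).trans hk
    obtain ⟨haA, haP⟩ := Finset.mem_filter.1 ha
    exact Finset.mem_filter.2 ⟨(hA.1 haA).1, hP a haA haP⟩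
  refine ⟨hV, fun a ha ↦ hends a (hA.1 ha).1, hconn, ?_, ?_, ?_, ?_, ?_, ?_, ?_, n, ?_⟩
  · rintro ⟨a, b⟩ hab
    obtain ⟨hab, haS, hbS⟩ := hR.1 hab
    obtain ⟨ha, hb, hsrc⟩ := hrel _ hab
    exact ⟨hA.2 ⟨ha, haS⟩, hA.2 ⟨hb, hbS⟩, hsrc⟩
  · exact fun x ↦ hle (fun a _ h ↦ h) (hout x)
  · exact fun x ↦ hle (fun a _ h ↦ h) (hin x)
  · exact fun a ha ↦ hle (fun b hb ↦ .imp_right (mt (hR' hb ha).2)) (hprev a (hA.1 ha).1)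
  · exact fun a ha ↦ hle (fun b hb ↦ .imp_right (mt (hR' ha hb).2)) (hnext a (hA.1 ha).1)
  · exact fun a ha ↦ hle (fun b hb ↦ (hR' hb ha).1) (hpred a (hA.1 ha).1)
  · exact fun a ha ↦ hle (fun b hb ↦ (hR' ha hb).1) (hsucc a (hA.1 ha).1)
  · rintro l ⟨hne, hl, hpath⟩ hlen
    obtain ⟨a, b, hab, hinfix⟩ := hn l ⟨hne, fun c hc ↦ (hA.1 (hl c hc)).1, hpath⟩ hlen
    have hmem : ∀ c ∈ [a, b], c ∉ S := fun c hc ↦ (hA.1 (hl c (hinfix.subset hc))).2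
    exact ⟨a, b, hR.2 ⟨hab, hmem a (by simp), hmem b (by simp)⟩, hinfix⟩

end DeleteArrows

/-- Let `𝚫 ∈ Ã` and let `𝒪₁, …, 𝒪_m` be *all* the pairwise
distinct triangles in `𝚫`.  Removing one arrow from each triangle yields a
`1`-cycle gentle quiver. -/
theorem stmt13 (Q : QuivRel) (st : SigmaTau Q) (hA : ClassAtilde Q st)
    (m : ℕ) (O : Fin m → Finset ℕ)
    (hOtri : ∀ i, TriangleSet Q (O i)) (hOinj : Function.Injective O)
    (hall : ∀ T : Finset ℕ, TriangleSet Q T → ∃ i, T = O i)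
    (α : Fin m → ℕ) (hα : ∀ i, α i ∈ O i) :
    IsGentle (deleteArrows Q (Finset.image α Finset.univ)) ∧
    (deleteArrows Q (Finset.image α Finset.univ)).V.card =
      (deleteArrows Q (Finset.image α Finset.univ)).A.card := by
  have hQ : IsGentle Q := hA.1
  have hαO : ∀ i j, α j ∈ O i → j = i := fun i j hji ↦
    hOinj ((hOtri j).eq_of_mem hQ st (hOtri i) (hα j) hji)
  refine ⟨isGentle_deleteArrows hQ (connected_deleteArrows_image hQ.connected hOtri hα hαO), ?_⟩
  have hαinj : Function.Injective α := fun i j hij ↦ hαO j i (hij ▸ hα j)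
  have hsub : Finset.univ.image α ⊆ Q.A :=
    Finset.image_subset_iff.2 fun i _ ↦ (hOtri i).subset (hα i)
  have hrange : {T | TriangleSet Q T} = Set.range O :=
    Set.ext fun T ↦ ⟨fun hT ↦ (hall T hT).imp fun _ ↦ Eq.symm, fun ⟨i, hi⟩ ↦ hi ▸ hOtri i⟩
  have htriangles : {T | TriangleSet Q T}.ncard = m := by
    rw [hrange, Set.ncard_range_of_injective hOinj, Nat.card_fin]
  calc Q.V.card = Q.A.card - m :=
      Nat.eq_sub_of_add_eq (htriangles ▸ hA.card_add_ncard_triangleSet)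
    _ = (Q.A \ Finset.univ.image α).card := by
      rw [Finset.card_sdiff_of_subset hsub, Finset.card_image_of_injective _ hαinj, Finset.card_fin]

end GentleQuiv
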